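/- (Difference formula relating v-adic and ∞-adic multiple zeta star values at negative integers.) Let r ≥ 1 and m_1,…,m_r ∈ ℤ_{≥0}. Then in A: ζ_v⋆(−m_1,…,−m_r) − ζ_∞⋆(−m_1,…,−m_r) = Σ_{l=0}^{r} (−1)^l · ζ⋆_{<d}(−m_{l+1},…,−m_r) · [ Σ_{(a_1,…,a_l)} v^{a_1+⋯+a_l} · ζ_{<d}(−(m_1−a_1)) ⋯ ζ_{<d}(−(m_l−a_l)) · C(m_1,a_1) ⋯ C(m_l,a_l) · ζ_∞⋆(−a_1,…,−a_l) ], where the inner sum runs over all integer tuples (a_1,…,a_l) with 0 ≤ a_j ≤ m_j, (q−1) | (m_j − a_j) for all 1 ≤ j ≤ l, and a_j = m_j for at least one j (in particular the l = 0 summand is 0). -/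

import Mathlib

open Polynomial

/-- The power sum `S_i(-m)`: the sum of `n ^ m` over monic polynomials `n` of degree `i`. -/
noncomputable def powerSum (F : Type*) [Field F] [Fintype F] (i m : ℕ) : Polynomial F :=
  ∑ᶠ n ∈ {n : Polynomial F | n.Monic ∧ n.natDegree = i}, n ^ m

/-- The restricted power sum `S̃_i(-m)`: the sum of `n ^ m` over monic polynomials `n` of
degree `i` not divisible by `v`. -/
noncomputable def powerSumV (F : Type*) [Field F] [Fintype F] (v : Polynomial F) (i m : ℕ) :
    Polynomial F :=
  ∑ᶠ n ∈ {n : Polynomial F | n.Monic ∧ n.natDegree = i ∧ ¬ v ∣ n}, n ^ m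

/-- `ζ_∞(-m_1, …, -m_r)`, the ∞-adic multiple zeta value at nonpositive integers:
the sum over `i_1 > ⋯ > i_r ≥ 0` of `S_{i_1}(-m_1) ⋯ S_{i_r}(-m_r)`.
Only `m 0, …, m (r-1)` are used.  The depth-0 value is `1`. -/
noncomputable def zetaInf (F : Type*) [Field F] [Fintype F] (r : ℕ) (m : ℕ → ℕ) :
    Polynomial F :=
  ∑ᶠ i ∈ {i : Fin r → ℕ | StrictAnti i}, ∏ j : Fin r, powerSum F (i j) (m (j : ℕ))

/-- `ζ⋆_∞(-m_1, …, -m_r)`, the ∞-adic multiple zeta star value at nonpositive integers: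
the sum over `i_1 ≥ ⋯ ≥ i_r ≥ 0` of `S_{i_1}(-m_1) ⋯ S_{i_r}(-m_r)`. -/
noncomputable def zetaInfStar (F : Type*) [Field F] [Fintype F] (r : ℕ) (m : ℕ → ℕ) :
    Polynomial F :=
  ∑ᶠ i ∈ {i : Fin r → ℕ | Antitone i}, ∏ j : Fin r, powerSum F (i j) (m (j : ℕ))

/-- `ζ_v(-m_1, …, -m_r)`, the v-adic multiple zeta value at nonpositive integers. -/
noncomputable def zetaV (F : Type*) [Field F] [Fintype F] (v : Polynomial F) (r : ℕ)
    (m : ℕ → ℕ) : Polynomial F :=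
  ∑ᶠ i ∈ {i : Fin r → ℕ | StrictAnti i}, ∏ j : Fin r, powerSumV F v (i j) (m (j : ℕ))

/-- `ζ⋆_v(-m_1, …, -m_r)`, the v-adic multiple zeta star value at nonpositive integers. -/
noncomputable def zetaVStar (F : Type*) [Field F] [Fintype F] (v : Polynomial F) (r : ℕ)
    (m : ℕ → ℕ) : Polynomial F :=
  ∑ᶠ i ∈ {i : Fin r → ℕ | Antitone i}, ∏ j : Fin r, powerSumV F v (i j) (m (j : ℕ))

/-- `ζ_{<d}(-m_1, …, -m_r)`, the truncated multiple zeta value: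
the sum over `d > i_1 > ⋯ > i_r ≥ 0` of `S_{i_1}(-m_1) ⋯ S_{i_r}(-m_r)`. -/
noncomputable def zetaLt (F : Type*) [Field F] [Fintype F] (d r : ℕ) (m : ℕ → ℕ) :
    Polynomial F :=
  ∑ᶠ i ∈ {i : Fin r → ℕ | StrictAnti i ∧ ∀ j, i j < d},
    ∏ j : Fin r, powerSum F (i j) (m (j : ℕ))

/-- `ζ⋆_{<d}(-m_1, …, -m_r)`, the truncated multiple zeta star value. -/
noncomputable def zetaLtStar (F : Type*) [Field F] [Fintype F] (d r : ℕ) (m : ℕ → ℕ) :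
    Polynomial F :=
  ∑ᶠ i ∈ {i : Fin r → ℕ | Antitone i ∧ ∀ j, i j < d},
    ∏ j : Fin r, powerSum F (i j) (m (j : ℕ))

/-- `ζ_{<d}(-m)`, the depth-one truncated zeta value `Σ_{d > i ≥ 0} S_i(-m)`. -/
noncomputable def zetaLtOne (F : Type*) [Field F] [Fintype F] (d m : ℕ) : Polynomial F :=
  ∑ᶠ i ∈ {i : ℕ | i < d}, powerSum F i m

section StarSum

variable {R : Type*} [CommRing R]

open Classical in
/-- The sum of `∏ j, f (i j) (m j)` over the weakly decreasing tuples `N > i_1 ≥ ⋯ ≥ i_r ≥ 0`. -/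
noncomputable def starSum (f : ℕ → ℕ → R) (N : ℕ) {r : ℕ} (m : Fin r → ℕ) : R :=
  ∑ i ∈ Fintype.piFinset (fun _ : Fin r => Finset.range N) with Antitone i, ∏ j, f (i j) (m j)

lemma starSum_zero (f : ℕ → ℕ → R) (N : ℕ) (m : Fin 0 → ℕ) : starSum f N m = 1 := by
  classical
  simp [starSum, Subsingleton.antitone]

lemma starSum_succ (f : ℕ → ℕ → R) (N : ℕ) {r : ℕ} (m : Fin (r + 1) → ℕ) :
    starSum f N m =
      ∑ i ∈ Finset.range N, f i (m 0) * starSum f (i + 1) (fun j : Fin r => m j.succ) := by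
  classical
  simp only [starSum, Finset.mul_sum]
  rw [Finset.sum_sigma']
  refine Finset.sum_bij' (fun i _ => ⟨i 0, Fin.tail i⟩) (fun p _ => Fin.cons p.1 p.2)
    ?_ ?_ ?_ ?_ ?_
  · intro i hi
    simp only [Finset.mem_filter, Fintype.mem_piFinset, Finset.mem_range, Finset.mem_sigma] at hi ⊢
    refine ⟨hi.1 0, fun j => Nat.lt_succ_of_le (hi.2 (Fin.zero_le _)), fun a b hab => ?_⟩
    exact hi.2 (Fin.succ_le_succ_iff.2 hab)
  · rintro ⟨k, t⟩ hp
    simp only [Finset.mem_filter, Fintype.mem_piFinset, Finset.mem_range, Finset.mem_sigma] at hp ⊢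
    obtain ⟨hk, ht, hanti⟩ := hp
    refine ⟨fun j => ?_, fun a b hab => ?_⟩
    · refine Fin.cases ?_ (fun j => ?_) j
      · simpa using hk
      · have := ht j
        simp only [Fin.cons_succ]
        omega
    · induction a using Fin.cases with
      | zero =>
        induction b using Fin.cases with
        | zero => exact le_rfl
        | succ b => simpa using Nat.le_of_lt_succ (ht b)
      | succ a =>
        induction b using Fin.cases with
        | zero => exact absurd hab (by simp)
        | succ b => simpa using hanti (Fin.succ_le_succ_iff.1 hab)
  · intro i _
    exact Fin.cons_self_tail i
  · rintro ⟨k, t⟩ _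
    simp
  · intro i _
    rw [Fin.prod_univ_succ]
    rfl

lemma starSum_congr {f g : ℕ → ℕ → R} {N : ℕ} (h : ∀ i < N, ∀ a, f i a = g i a) {r : ℕ}
    (m : Fin r → ℕ) : starSum f N m = starSum g N m := by
  classical
  refine Finset.sum_congr rfl fun i hi => Finset.prod_congr rfl fun j _ => h _ ?_ _
  simpa using (Fintype.mem_piFinset.1 (Finset.mem_filter.1 hi).1) j

/-- Splitting a star sum according to the number `l` of indices that are at least `d`. -/
lemma starSum_add (f : ℕ → ℕ → R) (d N r : ℕ) (m : ℕ → ℕ) :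
    starSum f (N + d) (fun j : Fin r => m j) =
      ∑ l ∈ Finset.range (r + 1), starSum (fun i a => f (i + d) a) N (fun j : Fin l => m j) *
        starSum f d (fun j : Fin (r - l) => m (l + j)) := by
  induction r generalizing N m with
  | zero => simp [starSum_zero]
  | succ r ih =>
    rw [Finset.sum_range_succ', starSum_succ, add_comm N d, Finset.sum_range_add, add_comm]
    congr 1
    · simp only [starSum_succ, Finset.sum_mul]
      rw [Finset.sum_comm]
      refine Finset.sum_congr rfl fun i _ => ?_
      have := ih (i + 1) fun j => m (j + 1)
      simp only [Fin.val_succ, Fin.val_zero, add_comm d i]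
      rw [add_right_comm i d 1, this, Finset.mul_sum]
      refine Finset.sum_congr rfl fun l _ => ?_
      rw [mul_assoc, Nat.add_sub_add_right]
      simp only [add_right_comm l 1]
    · rw [starSum_zero, one_mul]
      simp only [Nat.sub_zero, zero_add]
      rw [starSum_succ]

/-- Multilinear expansion of a star sum. -/
lemma starSum_sum (g c : ℕ → ℕ → R) (T : ℕ → Finset ℕ) (N : ℕ) {r : ℕ} (m : Fin r → ℕ) :
    starSum (fun i b => -∑ a ∈ T b, c b a * g i a) N m =
      (-1) ^ r * ∑ a ∈ Fintype.piFinset fun j => T (m j), (∏ j, c (m j) (a j)) * starSum g N a := by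
  classical
  have h (i : Fin r → ℕ) : ∏ j, (-∑ a ∈ T (m j), c (m j) a * g (i j) a) =
      (-1) ^ r * ∑ a ∈ Fintype.piFinset fun j => T (m j),
        (∏ j, c (m j) (a j)) * ∏ j, g (i j) (a j) := by
    rw [Finset.prod_neg, Finset.prod_univ_sum]
    simp [Finset.prod_mul_distrib]
  simp only [starSum, h]
  rw [← Finset.mul_sum, Finset.sum_comm]
  simp only [Finset.mul_sum]

lemma finsum_antitone_eq_starSum (f : ℕ → ℕ → R) {N r : ℕ} (m : Fin r → ℕ)
    (h : ∀ j, ∀ i ≥ N, f i (m j) = 0) :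
    ∑ᶠ i ∈ {i : Fin r → ℕ | Antitone i}, ∏ j, f (i j) (m j) = starSum f N m := by
  classical
  refine finsum_mem_eq_sum_of_inter_support_eq _ ?_
  ext i
  simp only [Set.mem_inter_iff, Set.mem_ofPred_eq, Function.mem_support, Finset.coe_filter,
    Fintype.mem_piFinset, Finset.mem_range]
  refine ⟨fun hi => ⟨⟨fun j => ?_, hi.1⟩, hi.2⟩, fun hi => ⟨hi.1.2, hi.2⟩⟩
  by_contra! hj
  exact hi.2 (Finset.prod_eq_zero (Finset.mem_univ j) (h j _ hj))

lemma finsum_antitone_lt_eq_starSum (f : ℕ → ℕ → R) (N : ℕ) {r : ℕ} (m : Fin r → ℕ) :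
    ∑ᶠ i ∈ {i : Fin r → ℕ | Antitone i ∧ ∀ j, i j < N}, ∏ j, f (i j) (m j) =
      starSum f N m := by
  classical
  refine finsum_mem_eq_sum_of_inter_support_eq _ ?_
  ext i
  simp [and_comm]

end StarSum

lemma monic_add_mul_and_natDegree {F : Type*} [Field F] {v k w : F[X]} (hv : v.Monic)
    (hk : k.Monic) (hw : w.degree < v.degree) :
    (w + v * k).Monic ∧ (w + v * k).natDegree = k.natDegree + v.natDegree := by
  have hlt : w.degree < (v * k).degree := by
    rw [degree_mul]
    refine hw.trans_le ?_
    rw [degree_eq_natDegree hk.ne_zero, degree_eq_natDegree hv.ne_zero]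
    exact_mod_cast Nat.le_add_right _ _
  refine ⟨(hv.mul hk).add_of_right hlt, ?_⟩
  rw [natDegree_add_eq_right_of_degree_lt hlt, hv.natDegree_mul hk, add_comm]

section PowerSum

variable (F : Type*) [Field F] [Fintype F]

lemma finite_degree_lt (d : ℕ) : {w : F[X] | w.degree < d}.Finite := by
  have : Finite (degreeLT F d) := Finite.of_equiv _ (degreeLTEquiv F d).toEquiv.symm
  refine (Set.toFinite (degreeLT F d : Set F[X])).subset fun w hw => ?_
  exact mem_degreeLT.2 hw

lemma finite_monic_natDegree (i : ℕ) : {n : F[X] | n.Monic ∧ n.natDegree = i}.Finite := by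
  refine (finite_degree_lt F (i + 1)).subset fun n hn => ?_
  obtain ⟨hn, rfl⟩ := hn
  exact degree_le_natDegree.trans_lt (by exact_mod_cast Nat.lt_succ_self _)

/-- The polynomials of degree less than `d`. -/
noncomputable def polysLT (d : ℕ) : Finset F[X] := (finite_degree_lt F d).toFinset

/-- The monic polynomials of degree `i`. -/
noncomputable def monics (i : ℕ) : Finset F[X] := (finite_monic_natDegree F i).toFinset

variable {F}

lemma mem_polysLT {d : ℕ} {w : F[X]} : w ∈ polysLT F d ↔ w.degree < d := by simp [polysLT]

lemma mem_monics {i : ℕ} {n : F[X]} : n ∈ monics F i ↔ n.Monic ∧ n.natDegree = i := by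
  simp [monics]

lemma powerSum_eq (i m : ℕ) : powerSum F i m = ∑ n ∈ monics F i, n ^ m :=
  finsum_mem_eq_finite_toFinset_sum _ _

lemma zetaLtOne_eq (d m : ℕ) : zetaLtOne F d m = ∑ i ∈ Finset.range d, powerSum F i m := by
  rw [zetaLtOne, ← finsum_mem_finset_eq_sum]
  simp

open Classical in
lemma powerSumV_eq (v : F[X]) (i m : ℕ) :
    powerSumV F v i m = ∑ n ∈ monics F i with ¬ v ∣ n, n ^ m := by
  rw [powerSumV, ← finsum_mem_finset_eq_sum]
  simp [mem_monics, and_assoc]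

lemma card_polysLT (d : ℕ) : (polysLT F d).card = Fintype.card F ^ d := by
  have h : (polysLT F d : Set F[X]) = degreeLT F d := by
    ext w
    simp [mem_polysLT, mem_degreeLT]
  rw [← Set.ncard_coe_finset, h, ← Nat.card_coe_set_eq]
  exact (Nat.card_congr (degreeLTEquiv F d).toEquiv).trans (by simp)

lemma sum_polysLT_pow_zero {d : ℕ} (hd : 0 < d) : ∑ w ∈ polysLT F d, w ^ 0 = 0 := by
  simp only [pow_zero, Finset.sum_const, card_polysLT, nsmul_eq_mul, mul_one, Nat.cast_pow]
  rw [← map_natCast (C : F →+* F[X]), FiniteField.cast_card_eq_zero, map_zero,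
    zero_pow hd.ne']

lemma divByMonic_mem_monics {v n : F[X]} (hv : v.Monic) {i : ℕ}
    (hn : n ∈ monics F (i + v.natDegree)) : n /ₘ v ∈ monics F i := by
  obtain ⟨hn, hdeg⟩ := mem_monics.1 hn
  refine mem_monics.2 ⟨?_, ?_⟩
  · rw [Monic, leadingCoeff_divByMonic_of_monic hv]
    · exact hn
    · rw [degree_eq_natDegree hn.ne_zero, degree_eq_natDegree hv.ne_zero, hdeg]
      exact_mod_cast Nat.le_add_left _ _
  · rw [natDegree_divByMonic _ hv, hdeg, Nat.add_sub_cancel]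

/-- Division with remainder by `v` parametrizes the monic polynomials of degree at least
`v.natDegree`. -/
lemma sum_monics_add {M : Type*} [AddCommMonoid M] {v : F[X]} (hv : v.Monic) (i : ℕ)
    (g : F[X] → M) :
    ∑ n ∈ monics F (i + v.natDegree), g n =
      ∑ k ∈ monics F i, ∑ w ∈ polysLT F v.natDegree, g (w + v * k) := by
  have hlt {w : F[X]} : w ∈ polysLT F v.natDegree ↔ w.degree < v.degree := by
    rw [mem_polysLT, degree_eq_natDegree hv.ne_zero]
  rw [← Finset.sum_product']
  refine Finset.sum_bij' (fun n _ => (n /ₘ v, n %ₘ v)) (fun p _ => p.2 + v * p.1) ?_ ?_ ?_ ?_ ?_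
  · intro n hn
    exact Finset.mem_product.2 ⟨divByMonic_mem_monics hv hn, hlt.2 (degree_modByMonic_lt n hv)⟩
  · rintro ⟨k, w⟩ hp
    obtain ⟨hk, hw⟩ := Finset.mem_product.1 hp
    obtain ⟨hmonic, hdeg⟩ := mem_monics.1 hk
    obtain ⟨hmonic', hdeg'⟩ := monic_add_mul_and_natDegree hv hmonic (hlt.1 hw)
    exact mem_monics.2 ⟨hmonic', by rw [hdeg', hdeg]⟩
  · intro n _
    exact modByMonic_add_div n v
  · rintro ⟨k, w⟩ hp
    obtain ⟨hk, hw⟩ := Finset.mem_product.1 hp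
    obtain ⟨h₁, h₂⟩ := div_modByMonic_unique k w hv ⟨rfl, hlt.1 hw⟩
    exact Prod.ext h₁ h₂
  · intro n _
    rw [modByMonic_add_div n v]

open Classical in
lemma sum_polysLT_erase_zero {M : Type*} [AddCommMonoid M] (d : ℕ) (g : F[X] → M) :
    ∑ w ∈ (polysLT F d).erase 0, g w =
      ∑ i ∈ Finset.range d, ∑ n ∈ monics F i, ∑ c : Fˣ, g (C (c : F) * n) := by
  simp only [← Finset.sum_product']
  rw [Finset.sum_sigma']
  symm
  refine Finset.sum_bij (fun p _ => C (p.2.2 : F) * p.2.1) ?_ ?_ ?_ ?_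
  · rintro ⟨i, n, c⟩ hp
    simp only [Finset.mem_sigma, Finset.mem_product, Finset.mem_univ, and_true, mem_monics,
      Finset.mem_range] at hp
    obtain ⟨hi, hn, rfl⟩ := hp
    refine Finset.mem_erase.2 ⟨mul_ne_zero (by simp) hn.ne_zero, mem_polysLT.2 ?_⟩
    rw [degree_C_mul c.ne_zero, degree_eq_natDegree hn.ne_zero]
    exact_mod_cast hi
  · rintro ⟨i, n, c⟩ hp ⟨i', n', c'⟩ hp' h
    simp only [Finset.mem_sigma, Finset.mem_product, Finset.mem_univ, and_true, mem_monics,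
      Finset.mem_range] at hp hp' h
    obtain ⟨hi, hn, rfl⟩ := hp
    obtain ⟨hi', hn', rfl⟩ := hp'
    have hc : c = c' := by
      have := congrArg leadingCoeff h
      rw [leadingCoeff_mul, leadingCoeff_mul, hn.leadingCoeff, hn'.leadingCoeff] at this
      exact Units.ext (by simpa using this)
    subst hc
    obtain rfl : n = n' := mul_left_cancel₀ (by simp) h
    rfl
  · intro w hw
    obtain ⟨hw0, hw⟩ := Finset.mem_erase.1 hw
    have hlc : w.leadingCoeff ≠ 0 := leadingCoeff_ne_zero.2 hw0
    refine ⟨⟨w.natDegree, C w.leadingCoeff⁻¹ * w, Units.mk0 _ hlc⟩, ?_, ?_⟩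
    · simp only [Finset.mem_sigma, Finset.mem_product, Finset.mem_univ, and_true, mem_monics,
        Finset.mem_range]
      refine ⟨?_, ?_, natDegree_C_mul (inv_ne_zero hlc)⟩
      · rw [mem_polysLT, degree_eq_natDegree hw0] at hw
        exact_mod_cast hw
      · rw [Monic, leadingCoeff_mul, leadingCoeff_C, inv_mul_cancel₀ hlc]
    · simp only [Units.val_mk0]
      rw [← mul_assoc, ← C_mul, mul_inv_cancel₀ hlc, C_1, one_mul]
  · intro p _
    rfl

open Classical in
lemma sum_polysLT_erase_zero_pow (d b : ℕ) :
    ∑ w ∈ (polysLT F d).erase 0, w ^ b =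
      if Fintype.card F - 1 ∣ b then -zetaLtOne F d b else 0 := by
  have h (n : F[X]) : ∑ c : Fˣ, (C (c : F) * n) ^ b =
      if Fintype.card F - 1 ∣ b then -n ^ b else 0 := by
    simp only [mul_pow, ← Finset.sum_mul, ← C_pow, ← map_sum]
    have := FiniteField.sum_pow_units F b
    rw [this]
    split_ifs <;> simp
  rw [sum_polysLT_erase_zero, zetaLtOne_eq]
  simp only [h, powerSum_eq]
  split_ifs <;> simp

lemma zero_mem_polysLT {d : ℕ} : (0 : F[X]) ∈ polysLT F d := by
  simp [mem_polysLT, bot_lt_iff_ne_bot]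

lemma sum_polysLT_pow {d b : ℕ} (hb : b ≠ 0) :
    ∑ w ∈ polysLT F d, w ^ b = if Fintype.card F - 1 ∣ b then -zetaLtOne F d b else 0 := by
  classical
  rw [← Finset.add_sum_erase _ _ zero_mem_polysLT, zero_pow hb, zero_add,
    sum_polysLT_erase_zero_pow]

lemma zetaLtOne_zero {d : ℕ} (hd : 0 < d) : zetaLtOne F d 0 = 1 := by
  classical
  have h := sum_polysLT_pow_zero (F := F) hd
  rw [← Finset.add_sum_erase _ _ zero_mem_polysLT, sum_polysLT_erase_zero_pow,
    if_pos (dvd_zero _), pow_zero] at h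
  exact (add_neg_eq_zero.1 h).symm

/-- The exponents `a ≤ m` with `q - 1 ∣ m - a`. -/
def exponents (q m : ℕ) : Finset ℕ := {a ∈ Finset.range (m + 1) | q - 1 ∣ m - a}

/-- The coefficient of `S_i(-a)` in the reduction of `S_{i + d}(-m)`, up to sign. -/
noncomputable def redCoeff (v : F[X]) (m a : ℕ) : F[X] :=
  v ^ a * (zetaLtOne F v.natDegree (m - a) * (m.choose a : F[X]))

lemma powerSum_add {v : F[X]} (hv : v.Monic) (hd : 0 < v.natDegree) (i m : ℕ) :
    powerSum F (i + v.natDegree) m =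
      -∑ a ∈ (exponents (Fintype.card F) m).erase m, redCoeff v m a * powerSum F i a := by
  have h : powerSum F (i + v.natDegree) m = ∑ a ∈ Finset.range (m + 1),
      v ^ a * (∑ w ∈ polysLT F v.natDegree, w ^ (m - a)) * (m.choose a : F[X]) *
        powerSum F i a := by
    simp only [powerSum_eq, sum_monics_add hv]
    simp only [add_comm _ (v * _), add_pow, mul_pow]
    refine (Finset.sum_congr rfl fun k _ => Finset.sum_comm).trans ?_
    rw [Finset.sum_comm]
    refine Finset.sum_congr rfl fun a _ => ?_
    simp only [Finset.mul_sum, Finset.sum_mul]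
    refine Finset.sum_congr rfl fun _ _ => Finset.sum_congr rfl fun _ _ => ?_
    ring
  rw [h, Finset.sum_range_succ, Nat.sub_self, sum_polysLT_pow_zero hd, mul_zero, zero_mul,
    zero_mul, add_zero, ← Finset.sum_neg_distrib]
  have hset : (exponents (Fintype.card F) m).erase m =
      {a ∈ Finset.range m | Fintype.card F - 1 ∣ m - a} := by
    ext a
    simp only [exponents, Finset.mem_erase, Finset.mem_filter, Finset.mem_range]
    grind
  rw [hset, Finset.sum_filter]
  refine Finset.sum_congr rfl fun a ha => ?_
  rw [sum_polysLT_pow (Nat.sub_ne_zero_of_lt (Finset.mem_range.1 ha))]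
  split_ifs
  · rw [redCoeff]
    ring
  · ring

lemma powerSum_eq_zero {i m : ℕ} (h : m < i) : powerSum F i m = 0 := by
  induction m using Nat.strong_induction_on generalizing i with
  | _ m ih =>
    obtain ⟨i, rfl⟩ : ∃ k, i = k + (X : F[X]).natDegree := ⟨i - 1, by rw [natDegree_X]; omega⟩
    rw [powerSum_add monic_X (by simp), neg_eq_zero]
    refine Finset.sum_eq_zero fun a ha => ?_
    simp only [exponents, Finset.mem_erase, Finset.mem_filter, Finset.mem_range] at ha
    rw [natDegree_X] at h
    rw [ih a (by omega) (by omega), mul_zero]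

lemma powerSumV_of_lt {v : F[X]} {i : ℕ} (hi : i < v.natDegree) (m : ℕ) :
    powerSumV F v i m = powerSum F i m := by
  classical
  rw [powerSumV_eq, powerSum_eq, Finset.filter_true_of_mem]
  intro n hn hdvd
  obtain ⟨hmonic, hdeg⟩ := mem_monics.1 hn
  have := natDegree_le_of_dvd hdvd hmonic.ne_zero
  omega

lemma powerSumV_add_eq_sub {v : F[X]} (hv : v.Monic) (i m : ℕ) :
    powerSumV F v (i + v.natDegree) m =
      powerSum F (i + v.natDegree) m - v ^ m * powerSum F i m := by
  classical
  rw [powerSumV_eq, powerSum_eq, eq_sub_iff_add_eq,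
    ← Finset.sum_filter_not_add_sum_filter (monics F (i + v.natDegree)) (v ∣ ·)]
  congr 1
  rw [powerSum_eq, Finset.mul_sum]
  refine Finset.sum_bij (fun k _ => v * k) ?_ ?_ ?_ ?_
  · intro k hk
    obtain ⟨hmonic, hdeg⟩ := mem_monics.1 hk
    refine Finset.mem_filter.2 ⟨mem_monics.2 ⟨hv.mul hmonic, ?_⟩, dvd_mul_right _ _⟩
    rw [hv.natDegree_mul hmonic, hdeg, add_comm]
  · intro k _ k' _ h
    exact mul_left_cancel₀ hv.ne_zero h
  · intro n hn
    obtain ⟨hn, k, rfl⟩ := Finset.mem_filter.1 hn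
    obtain ⟨hn, hdeg⟩ := mem_monics.1 hn
    have hk : k.Monic := hv.of_mul_monic_left hn
    refine ⟨k, mem_monics.2 ⟨hk, ?_⟩, rfl⟩
    rw [hv.natDegree_mul hk] at hdeg
    omega
  · intro k _
    exact (mul_pow v k m).symm

lemma powerSumV_add {v : F[X]} (hv : v.Monic) (hd : 0 < v.natDegree) (i m : ℕ) :
    powerSumV F v (i + v.natDegree) m =
      -∑ a ∈ exponents (Fintype.card F) m, redCoeff v m a * powerSum F i a := by
  have hm : m ∈ exponents (Fintype.card F) m := by simp [exponents]
  rw [powerSumV_add_eq_sub hv, powerSum_add hv hd, ← Finset.add_sum_erase _ _ hm, redCoeff,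
    Nat.sub_self, zetaLtOne_zero hd, Nat.choose_self]
  simp only [Nat.cast_one]
  ring

lemma powerSumV_eq_zero {v : F[X]} (hv : v.Monic) {i m : ℕ} (h : m + v.natDegree < i) :
    powerSumV F v i m = 0 := by
  obtain ⟨i, rfl⟩ : ∃ k, i = k + v.natDegree := ⟨i - v.natDegree, by omega⟩
  rw [powerSumV_add_eq_sub hv, powerSum_eq_zero (by omega), powerSum_eq_zero (by omega),
    mul_zero, sub_zero]

end PowerSum

section Difference

variable {F : Type*} [Field F] [Fintype F]

lemma zetaInfStar_eq_starSum {N r : ℕ} {m : ℕ → ℕ} (h : ∀ j < r, m j < N) :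
    zetaInfStar F r m = starSum (powerSum F) N fun j : Fin r => m j :=
  finsum_antitone_eq_starSum _ _ fun j _ hi =>
    powerSum_eq_zero ((h j j.isLt).trans_le hi)

lemma zetaVStar_eq_starSum {v : F[X]} (hv : v.Monic) {N r : ℕ} {m : ℕ → ℕ}
    (h : ∀ j < r, m j < N) :
    zetaVStar F v r m = starSum (powerSumV F v) (N + v.natDegree) fun j : Fin r => m j :=
  finsum_antitone_eq_starSum _ _ fun j i hi =>
    powerSumV_eq_zero hv (by have := h j j.isLt; omega)

lemma zetaLtStar_eq_starSum (d r : ℕ) (m : ℕ → ℕ) :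
    zetaLtStar F d r m = starSum (powerSum F) d fun j : Fin r => m j :=
  finsum_antitone_lt_eq_starSum _ _ _

/-- Expansion of a star sum of functions `f` that agree with `powerSum` in degrees less than
`v.natDegree` and reduce to `powerSum` in higher degrees. -/
lemma starSum_reduce {v : F[X]} {f : ℕ → ℕ → F[X]} {T : ℕ → Finset ℕ}
    (hlt : ∀ i < v.natDegree, ∀ a, f i a = powerSum F i a)
    (hadd : ∀ i b, f (i + v.natDegree) b = -∑ a ∈ T b, redCoeff v b a * powerSum F i a)
    (N r : ℕ) (m : ℕ → ℕ) :
    starSum f (N + v.natDegree) (fun j : Fin r => m j) =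
      ∑ l ∈ Finset.range (r + 1),
        (-1) ^ l * zetaLtStar F v.natDegree (r - l) (fun j => m (l + j)) *
          ∑ a ∈ Fintype.piFinset fun j : Fin l => T (m j),
            (∏ j : Fin l, redCoeff v (m j) (a j)) * starSum (powerSum F) N a := by
  rw [starSum_add]
  refine Finset.sum_congr rfl fun l _ => ?_
  simp only [hadd]
  rw [starSum_sum, starSum_congr hlt, zetaLtStar_eq_starSum]
  ring

/-- The tuples occurring in the difference formula, encoded as functions on `ℕ`, correspond to
tuples indexed by `Fin l`. -/
lemma finsum_tuples_eq {v : F[X]} {N l : ℕ} {m : ℕ → ℕ} (h : ∀ j < l, m j < N) :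
    ∑ᶠ a ∈ {a : ℕ → ℕ |
        (∀ j < l, a j ≤ m j ∧ (Fintype.card F - 1) ∣ (m j - a j)) ∧
          (∃ j < l, a j = m j) ∧ ∀ j, l ≤ j → a j = 0},
      v ^ (∑ j ∈ Finset.range l, a j) *
        (∏ j ∈ Finset.range l,
          zetaLtOne F v.natDegree (m j - a j) * (Nat.choose (m j) (a j) : F[X])) *
        zetaInfStar F l a =
    ∑ a ∈ Fintype.piFinset fun j : Fin l => exponents (Fintype.card F) (m j) with
        ∃ j : Fin l, a j = m j,
      (∏ j : Fin l, redCoeff v (m j) (a j)) * starSum (powerSum F) N a := by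
  rw [← finsum_mem_finset_eq_sum]
  refine finsum_mem_eq_of_bijOn (fun a (j : Fin l) => a j) ⟨?_, ?_, ?_⟩ ?_
  · rintro a ⟨ha, ⟨j, hj, hjm⟩, _⟩
    simp only [Finset.coe_filter, Set.mem_ofPred_eq, Fintype.mem_piFinset, exponents,
      Finset.mem_filter, Finset.mem_range, Nat.lt_succ_iff]
    exact ⟨fun j => ha j j.isLt, ⟨j, hj⟩, hjm⟩
  · rintro a ⟨_, _, ha⟩ b ⟨_, _, hb⟩ hab
    funext j
    by_cases hj : j < l
    · exact congrFun hab ⟨j, hj⟩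
    · rw [ha j (not_lt.1 hj), hb j (not_lt.1 hj)]
  · intro a ha
    simp only [Finset.coe_filter, Set.mem_ofPred_eq, Fintype.mem_piFinset, exponents,
      Finset.mem_filter, Finset.mem_range, Nat.lt_succ_iff] at ha
    obtain ⟨ha, j, hj⟩ := ha
    refine ⟨fun k => if hk : k < l then a ⟨k, hk⟩ else 0, ⟨fun k hk => ?_, ⟨j, j.isLt, ?_⟩, ?_⟩, ?_⟩
    · simpa [hk] using ha ⟨k, hk⟩
    · simpa using hj
    · intro k hk
      simp [not_lt.2 hk]
    · funext k
      simp
  · rintro a ⟨ha, _, _⟩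
    rw [zetaInfStar_eq_starSum fun j hj => (ha j hj).1.trans_lt (h j hj)]
    simp only [redCoeff, Finset.prod_mul_distrib, Finset.prod_pow_eq_pow_sum,
      Finset.prod_range, Finset.sum_range]

lemma sum_piFinset_sub_sum_erase {R : Type*} [AddCommGroup R] {l : ℕ} (T : ℕ → Finset ℕ)
    (m : Fin l → ℕ) (g : (Fin l → ℕ) → R) :
    ∑ a ∈ Fintype.piFinset (fun j => T (m j)), g a -
        ∑ a ∈ Fintype.piFinset (fun j => (T (m j)).erase (m j)), g a =
      ∑ a ∈ Fintype.piFinset (fun j => T (m j)) with ∃ j, a j = m j, g a := by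
  rw [sub_eq_iff_eq_add, ← Finset.sum_filter_add_sum_filter_not _ fun a => ∃ j, a j = m j]
  congr 2
  ext a
  simp only [Finset.mem_filter, Fintype.mem_piFinset, Finset.mem_erase, not_exists,
    forall_and, and_comm, ne_eq]

end Difference

/-- Difference formula relating v-adic and ∞-adic multiple zeta star values at negative
integers.  The inner sum runs over tuples `(a_1, …, a_l)` (encoded as functions
`a : ℕ → ℕ` vanishing from index `l` on) with `0 ≤ a_j ≤ m_j`, `(q-1) ∣ (m_j - a_j)`,
and `a_j = m_j` for at least one `j`; in particular the `l = 0` summand is `0`. -/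
theorem zetaVStar_sub_zetaInfStar (F : Type*) [Field F] [Fintype F] (v : Polynomial F)
    (hv : v.Monic) (hvirr : Irreducible v) (hd : 0 < v.natDegree) (r : ℕ) (hr : 1 ≤ r)
    (m : ℕ → ℕ) :
    zetaVStar F v r m - zetaInfStar F r m =
      ∑ l ∈ Finset.range (r + 1),
        (-1 : Polynomial F) ^ l * zetaLtStar F v.natDegree (r - l) (fun j => m (l + j)) *
          ∑ᶠ a ∈ {a : ℕ → ℕ |
              (∀ j < l, a j ≤ m j ∧ (Fintype.card F - 1) ∣ (m j - a j)) ∧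
                (∃ j < l, a j = m j) ∧ ∀ j, l ≤ j → a j = 0},
            v ^ (∑ j ∈ Finset.range l, a j) *
              (∏ j ∈ Finset.range l,
                zetaLtOne F v.natDegree (m j - a j) * (Nat.choose (m j) (a j) : Polynomial F)) *
              zetaInfStar F l a := by
  obtain ⟨N, hN⟩ : ∃ N, ∀ j < r, m j < N :=
    ⟨∑ j ∈ Finset.range r, m j + 1, fun j hj => Nat.lt_succ_of_le
      (Finset.single_le_sum (fun _ _ => Nat.zero_le _) (Finset.mem_range.2 hj))⟩
  rw [zetaVStar_eq_starSum hv hN,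
    zetaInfStar_eq_starSum fun j hj => (hN j hj).trans_le (Nat.le_add_right N v.natDegree),
    starSum_reduce (fun i hi a => powerSumV_of_lt hi a) (powerSumV_add hv hd),
    starSum_reduce (fun _ _ _ => rfl) (powerSum_add hv hd), ← Finset.sum_sub_distrib]
  refine Finset.sum_congr rfl fun l hl => ?_
  have hl : l ≤ r := Nat.lt_succ_iff.1 (Finset.mem_range.1 hl)
  rw [← mul_sub, sum_piFinset_sub_sum_erase (exponents (Fintype.card F)) (fun j : Fin l => m j),
    finsum_tuples_eq fun j hj => hN j (hj.trans_le hl)]
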